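/- Consider the system x_{t+1} = A x_t + w_t, y_t = C x_t + v_t with x_0 = 0, ‖w_t‖ ≤ C_w, ‖v_t‖ ≤ C_v for all t, and the convention y_s = 0 for s ≤ 0. Suppose A = S J S⁻¹ where J is block diagonal with Jordan blocks of size at most r and all eigenvalues of A are real and contained in [−1, 1], and set κ_A := ‖S‖ ‖S⁻¹‖. Then under the high-order differencing hint ỹ_t := ∑_{k=1}^{r} (−1)^{k+1} binom(r, k) y_{t-2k}, corresponding to the filter polynomial q_r(z) = (z² − 1)^r, the residual satisfies, for all t ≥ 1, ‖y_t − ỹ_t‖ ≤ 2^r C_v + (8^r + r (2e²)^r n) κ_A ‖C‖ C_w. -/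

import Mathlib

/-!
Up to sign, the residual at time `t` is the `r`-th iterate of the difference `f (t - 2) - f t`
applied to `y`. For a scalar system `x (t + 1) = a x (t) + u (t)` with `a ∈ [-1, 1]`,

  `x t - x (t - 2) = (a² - 1) x (t - 2) + a u (t - 2) + u (t - 1)`,

and the factor `1 - a² = (1 + |a|) (1 - |a|)` cancels the gain `1 / (1 - |a|)` of the system, so
that one difference makes the response at most `4 sup |u|`, uniformly in `a`. In a Jordan block each
coordinate is driven by the one below it, so climbing one row costs one further difference: if the
coordinate below is at most `B k` after `k` differences, the next one is at most
`4 (B k + 2 ^ k sup |u|)` after `k + 1`, whence `B k ≤ k 4 ^ k sup |u|`. A block of size at most `r`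
is exhausted after `r` differences, and the dimension enters only in passing from coordinates to
Euclidean norms.
-/

/-- The operator norm of a matrix induced by the Euclidean (ℓ²) norms.  For a column
matrix (a vector), this is the Euclidean norm of the vector. -/
noncomputable def opNorm {𝕜 : Type*} [RCLike 𝕜] {m n : Type*} [Fintype m] [Fintype n]
    [DecidableEq n] (A : Matrix m n 𝕜) : ℝ :=
  ‖LinearMap.toContinuousLinearMap (Matrix.toEuclideanLin A)‖

/-- The nilpotent upper shift matrix: `N i (i+1) = 1`, all other entries `0`. -/
def shiftMatrix (K : Type*) [Ring K] (m : ℕ) : Matrix (Fin m) (Fin m) K :=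
  Matrix.of fun i j => if (i : ℕ) + 1 = (j : ℕ) then 1 else 0

/-- The Jordan block `λ I + N` of size `m` with eigenvalue `λ`. -/
noncomputable def jordanBlock (K : Type*) [Ring K] (lam : K) (m : ℕ) :
    Matrix (Fin m) (Fin m) K :=
  lam • (1 : Matrix (Fin m) (Fin m) K) + shiftMatrix K m

/-- `A = S J S⁻¹` over `ℝ`, where `J` is block diagonal with Jordan blocks of size at
most `r` whose (real) eigenvalues lie in `[−1, 1]`, and `κA = ‖S‖ ‖S⁻¹‖`. -/
def HasRealJordanForm (n r : ℕ) (A : Matrix (Fin n) (Fin n) ℝ) (κA : ℝ) : Prop :=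
  ∃ (b : ℕ) (msize : Fin b → ℕ) (lam : Fin b → ℝ)
    (S : Matrix (Fin n) ((i : Fin b) × Fin (msize i)) ℝ)
    (S' : Matrix ((i : Fin b) × Fin (msize i)) (Fin n) ℝ),
      (∀ i, msize i ≤ r) ∧ (∀ i, lam i ∈ Set.Icc (-1 : ℝ) 1) ∧
      S * S' = 1 ∧ S' * S = 1 ∧
      A = S * Matrix.blockDiagonal' (fun i => jordanBlock ℝ (lam i) (msize i)) * S' ∧
      κA = opNorm S * opNorm S'

section FwdDiff

open fwdDiff

variable {M G : Type*} [AddCommMonoid M] {h : M}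

theorem neg_one_pow_smul_fwdDiff_iter [AddCommGroup G] (R : Type*) [Ring R] [Module R G]
    (f : M → G) (r : ℕ) (x : M) :
    (-1 : R) ^ r • (Δ_[h])^[r] f x =
      ∑ k ∈ Finset.range (r + 1), ((-1 : R) ^ k * (r.choose k : R)) • f (x + k • h) := by
  rw [fwdDiff_iter_eq_sum_shift, Finset.smul_sum]
  refine Finset.sum_congr rfl fun k hk => ?_
  obtain ⟨j, rfl⟩ := Nat.exists_eq_add_of_le (Finset.mem_range_succ_iff.mp hk)
  have hsign : (-1 : R) ^ (k + j) * (-1) ^ j = (-1) ^ k := by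
    rw [pow_add, mul_assoc, ← pow_add, Even.neg_one_pow ⟨j, rfl⟩, mul_one]
  rw [← Int.cast_smul_eq_zsmul R, smul_smul, Nat.add_sub_cancel_left]
  push_cast
  rw [← mul_assoc, hsign]

theorem sub_sum_choose_smul_eq_fwdDiff_iter [AddCommGroup G] (R : Type*) [Ring R] [Module R G]
    (f : M → G) (r : ℕ) (x : M) :
    f x - ∑ k ∈ Finset.Icc 1 r, ((-1 : R) ^ (k + 1) * (r.choose k : R)) • f (x + k • h) =
      (-1 : R) ^ r • (Δ_[h])^[r] f x := by
  rw [neg_one_pow_smul_fwdDiff_iter, Finset.range_eq_Ico,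
    Finset.sum_eq_sum_Ico_succ_bot (Nat.succ_pos r), sub_eq_add_neg, ← Finset.sum_neg_distrib]
  simp [pow_succ, Finset.Ico_add_one_right_eq_Icc]

theorem map_fwdDiff_iter {G' F : Type*} [AddCommGroup G] [AddCommGroup G'] [FunLike F G G']
    [AddMonoidHomClass F G G'] (φ : F) (f : M → G) (k : ℕ) (x : M) :
    φ ((Δ_[h])^[k] f x) = (Δ_[h])^[k] (fun y => φ (f y)) x := by
  simp only [fwdDiff_iter_eq_sum_shift, map_sum, map_zsmul]

theorem fwdDiff_iter_matrix_apply {m q : Type*} [AddCommGroup G] (Z : M → Matrix m q G) (k : ℕ)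
    (x : M) (a : m) (c : q) : (Δ_[h])^[k] Z x a c = (Δ_[h])^[k] (fun y => Z y a c) x :=
  map_fwdDiff_iter (Matrix.entryAddMonoidHom G a c) Z k x

variable [SeminormedAddCommGroup G] {f : M → G} {B : ℝ}

theorem norm_fwdDiff_iter_le (hf : ∀ x, ‖f x‖ ≤ B) (k : ℕ) (x : M) :
    ‖(Δ_[h])^[k] f x‖ ≤ 2 ^ k * B := by
  induction k generalizing x with
  | zero => simpa using hf x
  | succ k ih =>
    rw [Function.iterate_succ_apply']
    calc ‖(Δ_[h])^[k] f (x + h) - (Δ_[h])^[k] f x‖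
        ≤ 2 ^ k * B + 2 ^ k * B := norm_sub_le_of_le (ih _) (ih _)
      _ = 2 ^ (k + 1) * B := by ring

theorem norm_fwdDiff_iter_le_of_le {k r : ℕ} (hkr : k ≤ r) (hf : ∀ x, ‖(Δ_[h])^[k] f x‖ ≤ B)
    (x : M) : ‖(Δ_[h])^[r] f x‖ ≤ 2 ^ (r - k) * B := by
  have hiter := norm_fwdDiff_iter_le (h := h) hf (r - k) x
  rwa [← Function.iterate_add_apply, Nat.sub_add_cancel hkr] at hiter

end FwdDiff

/-- `x` is the zero-state response of the system `x (t + 1) = L (x t) + u t` to the input `u`.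
Being at rest before the input acts is encoded as `x t = 0` for all `t ≤ 0`, so that differences
of `x` reach into the past without truncation. -/
structure IsZeroStateResponse {E : Type*} [AddCommGroup E] (L : E → E) (u x : ℤ → E) :
    Prop where
  eq_zero_of_nonpos : ∀ t ≤ 0, x t = 0
  apply_add_one : ∀ t, x (t + 1) = L (x t) + u t

namespace IsZeroStateResponse

open fwdDiff

variable {E : Type*}

theorem map [AddCommGroup E] {E' F : Type*} [AddCommGroup E'] [FunLike F E E']
    [AddMonoidHomClass F E E'] {L : E → E} {L' : E' → E'} {u x : ℤ → E}
    (hx : IsZeroStateResponse L u x) (φ : F) (hφ : ∀ e, φ (L e) = L' (φ e)) :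
    IsZeroStateResponse L' (fun t => φ (u t)) (fun t => φ (x t)) where
  eq_zero_of_nonpos t ht := by rw [hx.eq_zero_of_nonpos t ht, map_zero]
  apply_add_one t := by rw [hx.apply_add_one, map_add, hφ]

theorem fwdDiff_iter [AddCommGroup E] {F : Type*} [FunLike F E E] [AddMonoidHomClass F E E]
    {L : F} {u x : ℤ → E} (hx : IsZeroStateResponse L u x) {h : ℤ} (hh : h ≤ 0) (k : ℕ) :
    IsZeroStateResponse L ((Δ_[h])^[k] u) ((Δ_[h])^[k] x) where
  eq_zero_of_nonpos t ht := by
    rw [fwdDiff_iter_eq_sum_shift]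
    refine Finset.sum_eq_zero fun j _ => ?_
    rw [hx.eq_zero_of_nonpos _ (add_nonpos ht (nsmul_nonpos hh j)), smul_zero]
  apply_add_one t := by
    have hshift : (fun s => x (s + 1)) = (fun s => L (x s)) + u := funext hx.apply_add_one
    rw [← fwdDiff_iter_comp_add, hshift, fwdDiff_iter_add, Pi.add_apply, map_fwdDiff_iter]

variable [SeminormedAddCommGroup E] {u x : ℤ → E} {U : ℝ}

theorem one_sub_norm_mul_norm_le {R : Type*} [SeminormedRing R] [Module R E]
    [IsBoundedSMul R E] {a : R} (ha : ‖a‖ ≤ 1) (hx : IsZeroStateResponse (a • ·) u x)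
    (hu : ∀ t, ‖u t‖ ≤ U) (t : ℤ) : (1 - ‖a‖) * ‖x t‖ ≤ U := by
  have hU : 0 ≤ U := (norm_nonneg _).trans (hu 0)
  rcases le_total t 0 with ht | ht
  · simpa [hx.eq_zero_of_nonpos t ht] using hU
  induction t, ht using Int.leInduction with
  | base => simpa [hx.eq_zero_of_nonpos 0 le_rfl] using hU
  | succ t _ ih =>
    have hstep : ‖x (t + 1)‖ ≤ ‖a‖ * ‖x t‖ + U := by
      rw [hx.apply_add_one]
      exact norm_add_le_of_le (norm_smul_le a _) (hu t)
    calc (1 - ‖a‖) * ‖x (t + 1)‖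
        ≤ (1 - ‖a‖) * (‖a‖ * ‖x t‖ + U) := by gcongr
      _ = ‖a‖ * ((1 - ‖a‖) * ‖x t‖) + (1 - ‖a‖) * U := by ring
      _ ≤ ‖a‖ * U + (1 - ‖a‖) * U := by gcongr
      _ = U := by ring

theorem norm_fwdDiff_neg_two_le [NormedSpace ℝ E] {a : ℝ} (ha : |a| ≤ 1)
    (hx : IsZeroStateResponse (a • ·) u x) (hu : ∀ t, ‖u t‖ ≤ U) (t : ℤ) :
    ‖Δ_[-2] x t‖ ≤ 4 * U := by
  have hdiff : Δ_[-2] x t = (1 - a ^ 2) • x (t - 2) - (a • u (t - 2) + u (t - 1)) := by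
    have h₁ := hx.apply_add_one (t - 2)
    have h₂ := hx.apply_add_one (t - 1)
    rw [show t - 2 + 1 = t - 1 by ring] at h₁
    rw [sub_add_cancel, h₁] at h₂
    rw [fwdDiff, ← sub_eq_add_neg, h₂]
    module
  have hstate : ‖(1 - a ^ 2) • x (t - 2)‖ ≤ 2 * U := by
    have hsq : |1 - a ^ 2| = (1 + |a|) * (1 - |a|) := by
      rw [abs_of_nonneg (sub_nonneg.mpr ((sq_le_one_iff_abs_le_one a).mpr ha)), ← sq_abs]
      ring
    rw [norm_smul, Real.norm_eq_abs, hsq, mul_assoc]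
    have hU := hx.one_sub_norm_mul_norm_le ha hu (t - 2)
    exact mul_le_mul (by linarith) hU (mul_nonneg (sub_nonneg.mpr ha) (norm_nonneg _)) zero_le_two
  have hinput : ‖a • u (t - 2) + u (t - 1)‖ ≤ 1 * U + U := by
    refine norm_add_le_of_le ?_ (hu _)
    rw [norm_smul]
    exact mul_le_mul ha (hu _) (norm_nonneg _) zero_le_one
  rw [hdiff]
  linarith [norm_sub_le_of_le hstate hinput]

end IsZeroStateResponse

section JordanBlock

variable {K q : Type*} [Ring K] {m : ℕ}

theorem shiftMatrix_mul_apply (Z : Matrix (Fin m) q K) (a : Fin m) (c : q) :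
    (shiftMatrix K m * Z) a c = if h : (a : ℕ) + 1 < m then Z ⟨a + 1, h⟩ c else 0 := by
  rw [Matrix.mul_apply]
  split_ifs with h
  · rw [Finset.sum_eq_single ⟨a + 1, h⟩] <;> simp +contextual [shiftMatrix, Fin.ext_iff, eq_comm]
  · refine Finset.sum_eq_zero fun j _ => ?_
    rw [shiftMatrix, Matrix.of_apply, if_neg (by omega), zero_mul]

theorem jordanBlock_mul_apply (l : K) (Z : Matrix (Fin m) q K) (a : Fin m) (c : q) :
    (jordanBlock K l m * Z) a c = l * Z a c + (shiftMatrix K m * Z) a c := by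
  rw [jordanBlock, Matrix.add_mul, Matrix.add_apply, Matrix.smul_mul, Matrix.one_mul,
    Matrix.smul_apply, smul_eq_mul]

theorem IsZeroStateResponse.entry_of_jordanBlock {l : K} {u z : ℤ → Matrix (Fin m) q K}
    (hz : IsZeroStateResponse (jordanBlock K l m * ·) u z) (a : Fin m) (c : q) :
    IsZeroStateResponse (l • ·) (fun t => (shiftMatrix K m * z t) a c + u t a c)
      (fun t => z t a c) where
  eq_zero_of_nonpos t ht := by rw [hz.eq_zero_of_nonpos t ht, Matrix.zero_apply]
  apply_add_one t := by
    rw [hz.apply_add_one, Matrix.add_apply, jordanBlock_mul_apply, add_assoc, smul_eq_mul]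

end JordanBlock

theorem submatrix_blockDiagonal'_mul {ι q K : Type*} {m n : ι → Type*} [Fintype ι]
    [DecidableEq ι] [∀ i, Fintype (n i)] [NonUnitalNonAssocSemiring K]
    (D : ∀ i, Matrix (m i) (n i) K) (Z : Matrix ((i : ι) × n i) q K) (i : ι) :
    (Matrix.blockDiagonal' D * Z).submatrix (Sigma.mk i) id =
      D i * Z.submatrix (Sigma.mk i) id := by
  ext a c
  simp only [Matrix.submatrix_apply, Matrix.mul_apply, Fintype.sum_sigma, id]
  rw [Finset.sum_eq_single i]
  · simp only [Matrix.blockDiagonal'_apply_eq]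
  · intro j _ hj
    simp only [Matrix.blockDiagonal'_apply_ne D a _ hj.symm, zero_mul, Finset.sum_const_zero]
  · simp

section JordanForm

open fwdDiff

variable {q : Type*}

theorem abs_fwdDiff_iter_apply_le_of_jordanBlock {m : ℕ} {l U : ℝ} (hl : |l| ≤ 1)
    {z u : ℤ → Matrix (Fin m) q ℝ} (hz : IsZeroStateResponse (jordanBlock ℝ l m * ·) u z) {c : q}
    (hu : ∀ t a, |u t a c| ≤ U) {k : ℕ} {a : Fin m} (hk : a + k = m) (t : ℤ) :
    |(Δ_[-2])^[k] z t a c| ≤ k * 4 ^ k * U := by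
  have hU : 0 ≤ U := (abs_nonneg _).trans (hu 0 a)
  induction k generalizing a t with
  | zero => omega
  | succ k ih =>
    have hD : IsZeroStateResponse (jordanBlock ℝ l m * ·) ((Δ_[-2])^[k] u) ((Δ_[-2])^[k] z) :=
      .fwdDiff_iter (L := Matrix.addMonoidHomMulLeft _) hz (by norm_num) k
    have hnext (t : ℤ) : |(shiftMatrix ℝ m * (Δ_[-2])^[k] z t) a c| ≤ k * 4 ^ k * U := by
      rw [shiftMatrix_mul_apply]
      split_ifs with h
      · exact ih (a := ⟨a + 1, h⟩) (by simp only; omega) t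
      · rw [abs_zero]
        positivity
    have hinput (t : ℤ) : |(Δ_[-2])^[k] u t a c| ≤ 2 ^ k * U := by
      rw [fwdDiff_iter_matrix_apply]
      exact norm_fwdDiff_iter_le (f := fun s => u s a c) (fun s => hu s a) k t
    rw [Function.iterate_succ_apply']
    calc |Δ_[-2] (fun t => (Δ_[-2])^[k] z t a c) t|
        ≤ 4 * (k * 4 ^ k * U + 2 ^ k * U) :=
          (hD.entry_of_jordanBlock a c).norm_fwdDiff_neg_two_le hl
            (fun t => norm_add_le_of_le (hnext t) (hinput t)) t
      _ ≤ 4 * (k * 4 ^ k * U + 4 ^ k * U) := by gcongr; norm_num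
      _ = (k + 1 : ℕ) * 4 ^ (k + 1) * U := by push_cast; ring

theorem abs_fwdDiff_iter_apply_le_of_jordanBlock_of_le {m r : ℕ} (hmr : m ≤ r) {l U : ℝ}
    (hl : |l| ≤ 1) {z u : ℤ → Matrix (Fin m) q ℝ}
    (hz : IsZeroStateResponse (jordanBlock ℝ l m * ·) u z) {c : q}
    (hu : ∀ t a, |u t a c| ≤ U) (a : Fin m) (t : ℤ) :
    |(Δ_[-2])^[r] z t a c| ≤ r * 4 ^ r * U := by
  have hU : 0 ≤ U := (abs_nonneg _).trans (hu 0 a)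
  obtain ⟨k, hk⟩ := Nat.exists_eq_add_of_le a.is_lt.le
  have hkr : k ≤ r := by omega
  have hzk (s : ℤ) : ‖(Δ_[-2])^[k] (fun s => z s a c) s‖ ≤ k * 4 ^ k * U := by
    rw [← fwdDiff_iter_matrix_apply]
    exact abs_fwdDiff_iter_apply_le_of_jordanBlock hl hz hu hk.symm s
  rw [fwdDiff_iter_matrix_apply]
  calc |(Δ_[-2])^[r] (fun s => z s a c) t|
      ≤ 2 ^ (r - k) * (k * 4 ^ k * U) := norm_fwdDiff_iter_le_of_le hkr hzk t
    _ ≤ 4 ^ (r - k) * (r * 4 ^ k * U) := by gcongr; norm_num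
    _ = r * 4 ^ r * U := by rw [← Nat.sub_add_cancel hkr, pow_add, Nat.add_sub_cancel]; ring

theorem abs_fwdDiff_iter_apply_le_of_blockDiagonal'_jordanBlock {ι : Type*} [Fintype ι]
    [DecidableEq ι] {m : ι → ℕ} {r : ℕ} (hmr : ∀ i, m i ≤ r) {l : ι → ℝ} (hl : ∀ i, |l i| ≤ 1)
    {U : ℝ} {z u : ℤ → Matrix ((i : ι) × Fin (m i)) q ℝ}
    (hz : IsZeroStateResponse (Matrix.blockDiagonal' (fun i => jordanBlock ℝ (l i) (m i)) * ·) u z)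
    {c : q} (hu : ∀ t a, |u t a c| ≤ U) (a : (i : ι) × Fin (m i)) (t : ℤ) :
    |(Δ_[-2])^[r] z t a c| ≤ r * 4 ^ r * U := by
  obtain ⟨i, a⟩ := a
  let block : Matrix ((i : ι) × Fin (m i)) q ℝ →+ Matrix (Fin (m i)) q ℝ :=
    AddMonoidHom.mk' (fun Z => Z.submatrix (Sigma.mk (β := fun i => Fin (m i)) i) id)
      fun _ _ => rfl
  have hblock := hz.map block (L' := (jordanBlock ℝ (l i) (m i) * ·))
    fun Z => submatrix_blockDiagonal'_mul (fun i => jordanBlock ℝ (l i) (m i)) Z i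
  have hbound := abs_fwdDiff_iter_apply_le_of_jordanBlock_of_le (hmr i) (hl i) hblock
    (fun t a => hu t ⟨i, a⟩) a t
  rwa [← map_fwdDiff_iter block] at hbound

end JordanForm

section L2OpNorm

open scoped Matrix.Norms.L2Operator
open WithLp (toLp)

variable {𝕜 m n : Type*} [RCLike 𝕜] [Fintype m] [Fintype n] [DecidableEq n]

theorem opNorm_eq_norm (A : Matrix m n 𝕜) : opNorm A = ‖A‖ := rfl

theorem norm_entry_le_l2_opNorm (A : Matrix m n 𝕜) (i : m) (j : n) : ‖A i j‖ ≤ ‖A‖ := by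
  have hcol := Matrix.l2_opNorm_mulVec A (EuclideanSpace.single j 1)
  rw [PiLp.norm_single, norm_one, mul_one] at hcol
  refine le_trans (le_of_eq ?_) ((PiLp.norm_apply_le _ i).trans hcol)
  simp

theorem norm_toLp_le_sqrt_card_mul {E : Type*} [SeminormedAddCommGroup E] {B : ℝ} {v : m → E}
    (hB : 0 ≤ B) (hv : ∀ i, ‖v i‖ ≤ B) : ‖toLp 2 v‖ ≤ √(Fintype.card m) * B := by
  rw [PiLp.norm_eq_of_L2, ← Real.sqrt_sq hB, ← Real.sqrt_mul (Nat.cast_nonneg _)]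
  refine Real.sqrt_le_sqrt ?_
  rw [← nsmul_eq_mul, ← Finset.card_univ]
  exact Finset.sum_le_card_nsmul _ _ _ fun i _ => by gcongr; exact hv i

theorem l2_opNorm_le_sqrt_card_mul {A : Matrix m n 𝕜} {B : ℝ} (hB : 0 ≤ B)
    (hA : ∀ i j, ‖A i j‖ ≤ B) : ‖A‖ ≤ √(Fintype.card m) * (√(Fintype.card n) * B) := by
  rw [Matrix.l2_opNorm_def]
  refine ContinuousLinearMap.opNorm_le_bound _ (by positivity) fun v => ?_
  rw [mul_assoc]
  refine norm_toLp_le_sqrt_card_mul (by positivity) fun i => ?_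
  have hrow : ‖toLp 2 (star (A i))‖ ≤ √(Fintype.card n) * B :=
    norm_toLp_le_sqrt_card_mul hB fun j => by simpa using hA i j
  calc ‖(A.mulVec v.ofLp) i‖ = ‖inner 𝕜 (toLp 2 (star (A i))) v‖ := by
        rw [EuclideanSpace.inner_eq_star_dotProduct, star_star, dotProduct_comm]; rfl
    _ ≤ ‖toLp 2 (star (A i))‖ * ‖v‖ := norm_inner_le_norm _ _
    _ ≤ √(Fintype.card n) * B * ‖v‖ := by gcongr

end L2OpNorm

section ResidualBound

open fwdDiff
open scoped Matrix.Norms.L2Operator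

theorem HasRealJordanForm.opNorm_fwdDiff_iter_le {n r : ℕ} {A : Matrix (Fin n) (Fin n) ℝ}
    {κA Cw : ℝ} (hA : HasRealJordanForm n r A κA) {x w : ℤ → Matrix (Fin n) (Fin 1) ℝ}
    (hx : IsZeroStateResponse (A * ·) w x) (hw : ∀ t, opNorm (w t) ≤ Cw) (t : ℤ) :
    opNorm ((Δ_[-2])^[r] x t) ≤ r * 4 ^ r * √n * κA * Cw := by
  obtain ⟨b, m, l, S, S', hm, hl, hSS', hS'S, rfl, rfl⟩ := hA
  simp only [opNorm_eq_norm] at *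
  have hCw : 0 ≤ Cw := (norm_nonneg _).trans (hw 0)
  have hz := hx.map (Matrix.addMonoidHomMulLeft S')
    (L' := (Matrix.blockDiagonal' (fun i => jordanBlock ℝ (l i) (m i)) * ·)) fun X => by
      simp only [Matrix.addMonoidHomMulLeft_apply, ← Matrix.mul_assoc, hS'S, Matrix.one_mul]
  have hu (t : ℤ) (a : (i : Fin b) × Fin (m i)) (c : Fin 1) : |(S' * w t) a c| ≤ ‖S'‖ * Cw :=
    calc |(S' * w t) a c| ≤ ‖S' * w t‖ := norm_entry_le_l2_opNorm (S' * w t) a c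
      _ ≤ ‖S'‖ * ‖w t‖ := Matrix.l2_opNorm_mul _ _
      _ ≤ ‖S'‖ * Cw := by gcongr; exact hw t
  have hentry (a c) : ‖(S' * (Δ_[-2])^[r] x t) a c‖ ≤ r * 4 ^ r * (‖S'‖ * Cw) := by
    have := abs_fwdDiff_iter_apply_le_of_blockDiagonal'_jordanBlock hm
      (fun i => abs_le.mpr (hl i)) hz (fun t a => hu t a c) a t
    rwa [← map_fwdDiff_iter] at this
  have hcoord : ‖S' * (Δ_[-2])^[r] x t‖ ≤ √n * (r * 4 ^ r * (‖S'‖ * Cw)) := by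
    have := l2_opNorm_le_sqrt_card_mul (by positivity) hentry
    simpa [Matrix.square_of_invertible S' S hS'S hSS'] using this
  calc ‖(Δ_[-2])^[r] x t‖ = ‖S * (S' * (Δ_[-2])^[r] x t)‖ := by
        rw [← Matrix.mul_assoc, hSS', Matrix.one_mul]
    _ ≤ ‖S‖ * ‖S' * (Δ_[-2])^[r] x t‖ := Matrix.l2_opNorm_mul _ _
    _ ≤ ‖S‖ * (√n * (r * 4 ^ r * (‖S'‖ * Cw))) := by gcongr
    _ = r * 4 ^ r * √n * (‖S‖ * ‖S'‖) * Cw := by ring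

theorem HasRealJordanForm.kappa_nonneg {n r : ℕ} {A : Matrix (Fin n) (Fin n) ℝ} {κA : ℝ}
    (hA : HasRealJordanForm n r A κA) : 0 ≤ κA := by
  obtain ⟨_, _, _, S, S', _, _, _, _, _, rfl⟩ := hA
  exact mul_nonneg (norm_nonneg _) (norm_nonneg _)

theorem high_order_differencing_residual_bound_general {ι : Type*} [Fintype ι] {n r : ℕ}
    {A : Matrix (Fin n) (Fin n) ℝ} {C : Matrix ι (Fin n) ℝ} {κA Cw Cv : ℝ}
    (hA : HasRealJordanForm n r A κA) {x w : ℤ → Matrix (Fin n) (Fin 1) ℝ}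
    {y v : ℤ → Matrix ι (Fin 1) ℝ} (hx : IsZeroStateResponse (A * ·) w x)
    (hy : ∀ t, y t = C * x t + v t) (hw : ∀ t, opNorm (w t) ≤ Cw) (hv : ∀ t, opNorm (v t) ≤ Cv)
    (t : ℤ) :
    opNorm (y t - ∑ k ∈ Finset.Icc 1 r,
        ((-1 : ℝ) ^ (k + 1) * (r.choose k : ℝ)) • y (t - 2 * (k : ℤ)))
      ≤ 2 ^ r * Cv + r * 4 ^ r * √n * κA * opNorm C * Cw := by
  have hlag (k : ℕ) : t - 2 * (k : ℤ) = t + k • (-2 : ℤ) := by rw [nsmul_eq_mul]; ring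
  have hdiff : (Δ_[-2])^[r] y t = C * (Δ_[-2])^[r] x t + (Δ_[-2])^[r] v t := by
    have hy' : y = (fun s => Matrix.addMonoidHomMulLeft C (x s)) + v := funext hy
    rw [hy', fwdDiff_iter_add, Pi.add_apply, ← map_fwdDiff_iter, Matrix.addMonoidHomMulLeft_apply]
  have hstate := hA.opNorm_fwdDiff_iter_le hx hw t
  simp only [hlag, sub_sum_choose_smul_eq_fwdDiff_iter, opNorm_eq_norm] at *
  rw [norm_smul, norm_pow, norm_neg, norm_one, one_pow, one_mul, hdiff]
  calc ‖C * (Δ_[-2])^[r] x t + (Δ_[-2])^[r] v t‖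
      ≤ ‖C‖ * ‖(Δ_[-2])^[r] x t‖ + ‖(Δ_[-2])^[r] v t‖ :=
        norm_add_le_of_le (Matrix.l2_opNorm_mul _ _) le_rfl
    _ ≤ ‖C‖ * (r * 4 ^ r * √n * κA * Cw) + 2 ^ r * Cv := by
        gcongr
        exact norm_fwdDiff_iter_le hv r t
    _ = 2 ^ r * Cv + r * 4 ^ r * √n * κA * ‖C‖ * Cw := by ring

theorem mul_four_pow_mul_sqrt_le (n r : ℕ) :
    r * 4 ^ r * √n ≤ (8 : ℝ) ^ r + r * (2 * Real.exp 2) ^ r * n := by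
  have hexp : (4 : ℝ) ≤ 2 * Real.exp 2 := by linarith [Real.add_one_le_exp (2 : ℝ)]
  have hsqrt : √(n : ℝ) ≤ n :=
    Real.sqrt_le_iff.mpr ⟨n.cast_nonneg, mod_cast Nat.le_self_pow two_ne_zero n⟩
  calc r * 4 ^ r * √n ≤ r * (2 * Real.exp 2) ^ r * n := by gcongr
    _ ≤ 8 ^ r + r * (2 * Real.exp 2) ^ r * n := le_add_of_nonneg_left (by positivity)

end ResidualBound

/-- bounded residual under high-order differencing.  For a system
whose `A` has a real Jordan form with blocks of size at most `r` and eigenvalues in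
`[−1,1]`, the hint `ỹ_t = ∑_{k=1}^r (−1)^{k+1} binom(r,k) y_{t−2k}` (filter
`q_r(z) = (z²−1)^r`) satisfies, for all `t ≥ 1`,
`‖y_t − ỹ_t‖ ≤ 2^r C_v + (8^r + r(2e²)^r n) κ_A ‖C‖ C_w`.
Sequences are indexed by `ℤ` with the conventions `x_s = 0` for `s ≤ 0`,
`w_s = 0` for `s < 0` and `v_s = 0` (hence `y_s = 0`) for `s ≤ 0`. -/
theorem high_order_differencing_residual_bound
    (n p r : ℕ)
    (A : Matrix (Fin n) (Fin n) ℝ) (C : Matrix (Fin p) (Fin n) ℝ)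
    (κA Cw Cv : ℝ)
    (hJordan : HasRealJordanForm n r A κA)
    (x w : ℤ → Matrix (Fin n) (Fin 1) ℝ) (y v : ℤ → Matrix (Fin p) (Fin 1) ℝ)
    (hx0 : ∀ s : ℤ, s ≤ 0 → x s = 0)
    (hw0 : ∀ s : ℤ, s < 0 → w s = 0)
    (hv0 : ∀ s : ℤ, s ≤ 0 → v s = 0)
    (hdyn : ∀ t : ℤ, x (t + 1) = A * x t + w t)
    (hout : ∀ t : ℤ, y t = C * x t + v t)
    (hw : ∀ t, opNorm (w t) ≤ Cw)
    (hv : ∀ t, opNorm (v t) ≤ Cv)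
    (ytil : ℤ → Matrix (Fin p) (Fin 1) ℝ)
    (hytil : ∀ t : ℤ, ytil t =
      ∑ k ∈ Finset.Icc 1 r, ((-1 : ℝ) ^ (k + 1) * (r.choose k : ℝ)) • y (t - 2 * (k : ℤ)))
    (t : ℤ) (ht : 1 ≤ t) :
    opNorm (y t - ytil t)
      ≤ 2 ^ r * Cv + ((8 : ℝ) ^ r + (r : ℝ) * (2 * Real.exp 2) ^ r * n) * κA * opNorm C * Cw := by
  have hCw : 0 ≤ Cw := (norm_nonneg _).trans (hw 0)
  have hκ : 0 ≤ κA := hJordan.kappa_nonneg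
  rw [hytil]
  refine (high_order_differencing_residual_bound_general hJordan ⟨hx0, hdyn⟩ hout hw hv t).trans ?_
  have hC : 0 ≤ opNorm C := norm_nonneg _
  gcongr
  exact mul_four_pow_mul_sqrt_le n r
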